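/- Let N = 2. Then ε_{2,2} = ζ(2) log 2 − 1 = (π²/6) log 2 − 1, where ε_{2,2} = sup{ |ρ^t_2(R_2^{−1}(C))/ρ_2(R_2^{−1}(C)) − 1| : t ∈ [0,1], C ⊆ [0,1] Borel with ρ_2(R_2^{−1}(C)) > 0 }. -/

import Mathlib

open MeasureTheory Set Real Filter

/-- The Rényi-type continued fraction map `R_N`. -/
noncomputable def RN (N : ℕ) (x : ℝ) : ℝ :=
  if x = 1 then 0 else (N : ℝ) / (1 - x) - ⌊(N : ℝ) / (1 - x)⌋

/-- The conditional probability measure `ρ^t_N`, with density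
`N(N-1+t)/[N-(1-x)(1-t)]²` on `[0,1]`. -/
noncomputable def rhoT (N : ℕ) (t : ℝ) : Measure ℝ :=
  (volume.restrict (Set.Icc (0 : ℝ) 1)).withDensity fun x =>
    ENNReal.ofReal ((N : ℝ) * ((N : ℝ) - 1 + t) / ((N : ℝ) - (1 - x) * (1 - t)) ^ 2)

/-- The invariant probability measure `ρ_N`, with density
`(log(N/(N-1)))⁻¹/(x+N-1)` on `[0,1]`. -/
noncomputable def rhoN (N : ℕ) : Measure ℝ :=
  (volume.restrict (Set.Icc (0 : ℝ) 1)).withDensity fun x =>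
    ENNReal.ofReal ((Real.log ((N : ℝ) / ((N : ℝ) - 1)))⁻¹ / (x + (N : ℝ) - 1))

/-! Write `ψ₁` for the trigamma function. The Perron–Frobenius operator of `R_N` sums over the
inverse branches `y ↦ 1 - N / (N + k + y)`. It fixes the density of `ρ_N` (a telescoping sum) and
sends the density of `ρ^t_N` to `(N - 1 + t) ψ₁(N - 1 + y + t)`. Hence the quotient
`ρ^t_N(R_N⁻¹ C) / ρ_N(R_N⁻¹ C)` is the `ρ_N`-average over `C` of an explicit continuous function
of `y`, which for `N = 2` is `log 2 * (1 + t) (1 + y) ψ₁(1 + y + t)`.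

Its maximum over the unit square is `log 2 * π² / 6`, attained at `t = y = 0` and approached by the
sets `C = [0, δ]`: by AM–GM one may take `t = y = s / 2`, and then
`ψ₁(1 + s) = (1 + s)⁻² + ψ₁(2 + s)`, where convexity bounds `ψ₁(2 + s)` by its chord on `[2, 4]`.
From below it is at least `5 / 4 * log 2`, and `log 2 * (5 / 4 + π² / 6) ≥ 2`, so that downward
deviations from `1` never exceed the largest upward one. -/

open scoped Topology ENNReal

section Trigamma

/-- The trigamma function `ψ₁(x) = ∑ₖ (k + x)⁻²`, which is the density that `ρ^t_N` acquires under
`R_N`, up to a factor and a shift. It is used for positive `x`; at the poles the infinite term is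
replaced by `1 / 0 = 0`. -/
noncomputable def trigamma (x : ℝ) : ℝ :=
  ∑' k : ℕ, 1 / ((k : ℝ) + x) ^ 2

lemma summable_one_div_nat_add_sq (x : ℝ) : Summable fun k : ℕ => 1 / ((k : ℝ) + x) ^ 2 := by
  simpa using (Real.summable_one_div_nat_add_rpow x 2).2 one_lt_two

lemma hasSum_trigamma (x : ℝ) : HasSum (fun k : ℕ => 1 / ((k : ℝ) + x) ^ 2) (trigamma x) :=
  (summable_one_div_nat_add_sq x).hasSum

lemma trigamma_nonneg (x : ℝ) : 0 ≤ trigamma x :=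
  tsum_nonneg fun _ => by positivity

lemma trigamma_eq_add_trigamma_add_one (x : ℝ) : trigamma x = 1 / x ^ 2 + trigamma (x + 1) := by
  rw [trigamma, (summable_one_div_nat_add_sq x).tsum_eq_zero_add, trigamma]
  simp [add_assoc, add_comm (1 : ℝ) x]

lemma trigamma_one : trigamma 1 = π ^ 2 / 6 := by
  have h := (hasSum_nat_add_iff' (f := fun n : ℕ => 1 / (n : ℝ) ^ 2) 1).2 hasSum_zeta_two
  exact (hasSum_trigamma 1).unique (by simpa using h)

lemma measurable_trigamma : Measurable trigamma :=
  Measurable.tsum fun _ => by fun_prop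

lemma convexOn_one_div_nat_add_sq (k : ℕ) :
    ConvexOn ℝ (Ioi 0) fun x : ℝ => 1 / ((k : ℝ) + x) ^ 2 := by
  have h := ((convexOn_zpow (𝕜 := ℝ) (-2)).translate_right (k : ℝ)).subset
    (fun x (hx : 0 < x) => add_pos_of_nonneg_of_pos k.cast_nonneg hx) (convex_Ioi 0)
  exact h.congr fun x _ => by simp [zpow_neg, zpow_ofNat]

lemma convexOn_trigamma : ConvexOn ℝ (Ioi 0) trigamma := by
  refine ⟨convex_Ioi 0, fun x hx y hy a b ha hb hab => ?_⟩
  exact hasSum_le (fun k => (convexOn_one_div_nat_add_sq k).2 hx hy ha hb hab) (hasSum_trigamma _)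
    (((hasSum_trigamma x).const_smul a).add ((hasSum_trigamma y).const_smul b))

lemma continuousOn_trigamma : ContinuousOn trigamma (Ioi 0) :=
  convexOn_trigamma.continuousOn isOpen_Ioi

lemma hasSum_sub_succ_of_antitone {a : ℕ → ℝ} {l : ℝ} (ha : Antitone a)
    (hl : Tendsto a atTop (𝓝 l)) :
    HasSum (fun k => a k - a (k + 1)) (a 0 - l) := by
  rw [hasSum_iff_tendsto_nat_of_nonneg fun k => sub_nonneg.2 (ha k.le_succ)]
  simpa only [Finset.sum_range_sub'] using hl.const_sub (a 0)

lemma hasSum_one_div_sub_one_div_pow {x : ℝ} (hx : 0 < x) {p : ℕ} (hp : p ≠ 0) :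
    HasSum (fun k : ℕ => (1 / ((k : ℝ) + x)) ^ p - (1 / ((k : ℝ) + 1 + x)) ^ p) ((1 / x) ^ p) := by
  have anti : Antitone fun k : ℕ => (1 / ((k : ℝ) + x)) ^ p := fun i j hij => by
    beta_reduce
    gcongr
  have lim : Tendsto (fun k : ℕ => (1 / ((k : ℝ) + x)) ^ p) atTop (𝓝 0) := by
    have h := (tendsto_atTop_add_const_right _ x tendsto_natCast_atTop_atTop).inv_tendsto_atTop
    simpa [hp] using h.pow p
  simpa using hasSum_sub_succ_of_antitone anti lim

-- By convexity the trapezoidal rule on each `[x + k, x + k + 1]` overestimates `∫ u⁻² du`.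
lemma one_div_add_le_trigamma {x : ℝ} (hx : 0 < x) : 1 / x + 1 / 2 * (1 / x) ^ 2 ≤ trigamma x := by
  have hsum := (hasSum_one_div_sub_one_div_pow hx one_ne_zero).add
    ((hasSum_one_div_sub_one_div_pow hx two_ne_zero).mul_left (1 / 2))
  rw [pow_one] at hsum
  refine hasSum_le (fun k => ?_) hsum (hasSum_trigamma x)
  have : (0 : ℝ) < k + x := by positivity
  have gap : 1 / ((k : ℝ) + x) ^ 2 - ((1 / (k + x)) ^ 1 - (1 / (k + 1 + x)) ^ 1
      + 1 / 2 * ((1 / (k + x)) ^ 2 - (1 / (k + 1 + x)) ^ 2))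
      = 1 / 2 * (1 / (k + x) - 1 / (k + 1 + x)) ^ 2 := by
    field_simp
    ring
  exact sub_nonneg.1 (gap ▸ by positivity)

lemma trigamma_two_add_le {s : ℝ} (h0 : 0 ≤ s) (h2 : s ≤ 2) :
    trigamma (2 + s) ≤ π ^ 2 / 6 - 1 - 13 / 72 * s := by
  have val2 : trigamma 2 = π ^ 2 / 6 - 1 := by
    have := trigamma_eq_add_trigamma_add_one 1
    norm_num [trigamma_one] at this
    linarith
  have val4 : trigamma 4 = π ^ 2 / 6 - 1 - 13 / 36 := by
    have h23 := trigamma_eq_add_trigamma_add_one 2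
    have h34 := trigamma_eq_add_trigamma_add_one 3
    norm_num [val2] at h23 h34
    linarith
  have chord : trigamma ((1 - s / 2) • 2 + (s / 2) • 4)
      ≤ (1 - s / 2) • trigamma 2 + (s / 2) • trigamma 4 :=
    convexOn_trigamma.2 (by simp) (by simp) (by linarith) (by linarith) (by ring)
  simp only [smul_eq_mul, val2, val4] at chord
  calc trigamma (2 + s) = trigamma ((1 - s / 2) * 2 + s / 2 * 4) := by ring_nf
    _ ≤ _ := chord
    _ = π ^ 2 / 6 - 1 - 13 / 72 * s := by ring

lemma pi_sq_div_six_lt : π ^ 2 / 6 < 1.645 := by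
  nlinarith [Real.pi_lt_d4, Real.pi_pos]

lemma sq_mul_chord_le {s z : ℝ} (hs : 0 ≤ s) (hz : z ≤ 1.645) :
    (1 + s / 2) ^ 2 * (1 / (1 + s) ^ 2 + (z - 1 - 13 / 72 * s)) ≤ z := by
  set q : ℝ := 628 - 288 * z + (1020 - 648 * z) * s + (601 - 432 * z) * s ^ 2
    + (150 - 72 * z) * s ^ 3 + 13 * s ^ 4
  have gap : z - (1 + s / 2) ^ 2 * (1 / (1 + s) ^ 2 + (z - 1 - 13 / 72 * s))
      = s * q / (288 * (1 + s) ^ 2) := by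
    simp only [q]
    field_simp
    ring
  have hq : 0 ≤ q := by
    have at_max : 0 ≤ (1.645 - z) * (288 + 648 * s + 432 * s ^ 2 + 72 * s ^ 3) :=
      mul_nonneg (by linarith) (by positivity)
    have cubic_part : 0 ≤ s * (s - 3 / 2) ^ 2 := by positivity
    nlinarith [sq_nonneg (s ^ 2 - 9 / 4), sq_nonneg (s - 4 / 3)]
  exact sub_nonneg.1 (gap ▸ by positivity)

lemma sq_mul_trigamma_one_add_le {s : ℝ} (h0 : 0 ≤ s) (h2 : s ≤ 2) :
    (1 + s / 2) ^ 2 * trigamma (1 + s) ≤ π ^ 2 / 6 := by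
  calc (1 + s / 2) ^ 2 * trigamma (1 + s)
      = (1 + s / 2) ^ 2 * (1 / (1 + s) ^ 2 + trigamma (2 + s)) := by
        rw [trigamma_eq_add_trigamma_add_one (1 + s), show 1 + s + 1 = 2 + s by ring]
    _ ≤ (1 + s / 2) ^ 2 * (1 / (1 + s) ^ 2 + (π ^ 2 / 6 - 1 - 13 / 72 * s)) := by
        gcongr
        exact trigamma_two_add_le h0 h2
    _ ≤ π ^ 2 / 6 := sq_mul_chord_le h0 pi_sq_div_six_lt.le

lemma mul_trigamma_le {t y : ℝ} (ht : t ∈ Icc (0 : ℝ) 1) (hy : y ∈ Icc (0 : ℝ) 1) :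
    (1 + t) * (1 + y) * trigamma (1 + (y + t)) ≤ π ^ 2 / 6 := by
  have amgm : (1 + t) * (1 + y) ≤ (1 + (y + t) / 2) ^ 2 := by
    linarith [sq_nonneg (t - y)]
  exact (mul_le_mul_of_nonneg_right amgm (trigamma_nonneg _)).trans
    (sq_mul_trigamma_one_add_le (add_nonneg hy.1 ht.1) (by linarith [hy.2, ht.2]))

-- With `s = y + t` fixed, `(1 + t) (1 + y)` is least at an end of the segment in the unit square:
-- it is at least `1 + s` and at least `2 s`.
lemma le_mul_trigamma {t y : ℝ} (ht : t ∈ Icc (0 : ℝ) 1) (hy : y ∈ Icc (0 : ℝ) 1) :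
    5 / 4 ≤ (1 + t) * (1 + y) * trigamma (1 + (y + t)) := by
  obtain ⟨ht0, ht1⟩ := ht
  obtain ⟨hy0, hy1⟩ := hy
  set s := y + t
  have s_nonneg : 0 ≤ s := add_nonneg hy0 ht0
  have one_add_le : 1 + s ≤ (1 + t) * (1 + y) := by linarith [mul_nonneg ht0 hy0]
  have two_mul_le : 2 * s ≤ (1 + t) * (1 + y) := by
    linarith [mul_nonneg (sub_nonneg.2 ht1) (sub_nonneg.2 hy1)]
  refine le_trans ?_ (mul_le_mul_of_nonneg_left
    (one_div_add_le_trigamma (x := 1 + s) (by positivity)) (by positivity))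
  have combine : 1 / (1 + s) + 1 / 2 * (1 / (1 + s)) ^ 2 = (2 * s + 3) / (2 * (1 + s) ^ 2) := by
    field_simp
    ring
  rw [combine, ← mul_div_assoc, le_div_iff₀ (by positivity)]
  rcases le_total s 1 with hs1 | hs1
  · nlinarith [mul_le_mul_of_nonneg_right one_add_le (by linarith : 0 ≤ 2 * s + 3)]
  · nlinarith [mul_le_mul_of_nonneg_right two_mul_le (by linarith : 0 ≤ 2 * s + 3)]

end Trigamma

section TransferOperator

variable {N : ℕ}

/-- The inverse branch of `R_N` with digit `N + k`, that is, the inverse of `R_N` on the interval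
where `⌊N / (1 - x)⌋ = N + k`. -/
noncomputable def inverseBranch (N k : ℕ) (y : ℝ) : ℝ :=
  1 - N / (N + k + y)

/-- The Perron–Frobenius operator of `R_N`, acting on densities on `[0, 1]` with respect to Lebesgue
measure. -/
noncomputable def transferOperator (N : ℕ) (φ : ℝ → ℝ≥0∞) (y : ℝ) : ℝ≥0∞ :=
  ∑' k : ℕ, ENNReal.ofReal (N / (N + k + y) ^ 2) * φ (inverseBranch N k y)

lemma RN_eq_fract {x : ℝ} (hx : x ≠ 1) : RN N x = Int.fract ((N : ℝ) / (1 - x)) :=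
  if_neg hx

lemma measurable_RN (N : ℕ) : Measurable (RN N) :=
  Measurable.ite (measurableSet_singleton 1) measurable_const (by fun_prop)

lemma measurable_inverseBranch (N k : ℕ) : Measurable (inverseBranch N k) := by
  unfold inverseBranch
  fun_prop

lemma inverseBranch_mem_Ico (hN : 0 < N) (k : ℕ) {y : ℝ} (hy : 0 ≤ y) :
    inverseBranch N k y ∈ Ico (0 : ℝ) 1 := by
  have le_one : (N : ℝ) / (N + k + y) ≤ 1 := by
    rw [div_le_one (by positivity), add_assoc]
    exact le_add_of_nonneg_right (by positivity)
  have pos : 0 < (N : ℝ) / (N + k + y) := by positivity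
  exact ⟨by linarith [inverseBranch.eq_def N k y], by linarith [inverseBranch.eq_def N k y]⟩

lemma div_one_sub_inverseBranch (hN : 0 < N) (k : ℕ) {y : ℝ} (hy : 0 ≤ y) :
    (N : ℝ) / (1 - inverseBranch N k y) = N + k + y := by
  rw [inverseBranch, sub_sub_cancel]
  field_simp

lemma RN_inverseBranch (hN : 0 < N) (k : ℕ) {y : ℝ} (hy : y ∈ Ico (0 : ℝ) 1) :
    RN N (inverseBranch N k y) = y := by
  rw [RN_eq_fract (inverseBranch_mem_Ico hN k hy.1).2.ne, div_one_sub_inverseBranch hN k hy.1,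
    ← Nat.cast_add, Int.fract_natCast_add, Int.fract_eq_self.2 hy]

lemma exists_inverseBranch_RN_eq (hN : 0 < N) {x : ℝ} (hx : x ∈ Ico (0 : ℝ) 1) :
    ∃ k, inverseBranch N k (RN N x) = x := by
  have hx1 : 0 < 1 - x := sub_pos.2 hx.2
  have digit_ge : (N : ℤ) ≤ ⌊(N : ℝ) / (1 - x)⌋ := by
    rw [Int.le_floor, Int.cast_natCast, le_div_iff₀ hx1]
    exact mul_le_of_le_one_right N.cast_nonneg (by linarith [hx.1])
  obtain ⟨k, hk⟩ := Int.le.dest digit_ge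
  have digit : (N : ℝ) + k = ⌊(N : ℝ) / (1 - x)⌋ := by
    rw [← hk]
    push_cast
    rfl
  refine ⟨k, ?_⟩
  rw [inverseBranch, RN_eq_fract hx.2.ne, digit, Int.floor_add_fract]
  field_simp
  ring

lemma preimage_RN_inter_Ico (hN : 0 < N) (C : Set ℝ) :
    RN N ⁻¹' C ∩ Ico 0 1 = ⋃ k, inverseBranch N k '' (C ∩ Ico 0 1) := by
  ext x
  simp only [mem_inter_iff, mem_preimage, mem_iUnion]
  constructor
  · rintro ⟨hxC, hx⟩
    obtain ⟨k, hk⟩ := exists_inverseBranch_RN_eq hN hx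
    refine ⟨k, RN N x, ⟨hxC, ?_⟩, hk⟩
    rw [RN_eq_fract hx.2.ne]
    exact ⟨Int.fract_nonneg _, Int.fract_lt_one _⟩
  · rintro ⟨k, y, ⟨hyC, hy⟩, rfl⟩
    exact ⟨by rwa [RN_inverseBranch hN k hy], inverseBranch_mem_Ico hN k hy.1⟩

lemma injOn_inverseBranch (hN : 0 < N) (k : ℕ) : InjOn (inverseBranch N k) (Ico 0 1) :=
  LeftInvOn.injOn (f₁' := RN N) fun _ hy => RN_inverseBranch hN k hy

lemma pairwise_disjoint_image_inverseBranch (hN : 0 < N) {A : Set ℝ} (hA : A ⊆ Ico 0 1) :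
    Pairwise (Function.onFun Disjoint fun k => inverseBranch N k '' A) := by
  intro i j hij
  rw [Function.onFun, disjoint_left]
  rintro _ ⟨y, hy, rfl⟩ ⟨z, hz, heq⟩
  have hzy : z = y := by
    rw [← RN_inverseBranch hN j (hA hz), heq, RN_inverseBranch hN i (hA hy)]
  have digits := congrArg (fun x => (N : ℝ) / (1 - x)) heq
  simp only [hzy, div_one_sub_inverseBranch hN _ (hA hy).1, add_left_inj, add_right_inj,
    Nat.cast_inj] at digits
  exact hij digits.symm

lemma hasDerivAt_inverseBranch (hN : 0 < N) (k : ℕ) {y : ℝ} (hy : 0 ≤ y) :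
    HasDerivAt (inverseBranch N k) (N / (N + k + y) ^ 2) y := by
  have hD : (N : ℝ) + k + y ≠ 0 := by positivity
  have h := (((hasDerivAt_id y).const_add ((N : ℝ) + k)).fun_inv hD).const_mul (N : ℝ)
    |>.const_sub 1
  rw [funext (inverseBranch.eq_def N k)]
  simpa [div_eq_mul_inv] using h

lemma setLIntegral_preimage_RN (hN : 0 < N) {φ : ℝ → ℝ≥0∞} (hφ : Measurable φ) {C : Set ℝ}
    (hC : MeasurableSet C) :
    ∫⁻ x in RN N ⁻¹' C ∩ Ico 0 1, φ x = ∫⁻ y in C ∩ Ico 0 1, transferOperator N φ y := by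
  have hA : MeasurableSet (C ∩ Ico (0 : ℝ) 1) := hC.inter measurableSet_Ico
  have hinj (k : ℕ) : InjOn (inverseBranch N k) (C ∩ Ico 0 1) :=
    (injOn_inverseBranch hN k).mono inter_subset_right
  have hderiv (k : ℕ) (y : ℝ) (hy : y ∈ C ∩ Ico (0 : ℝ) 1) :
      HasDerivWithinAt (inverseBranch N k) (N / (N + k + y) ^ 2) (C ∩ Ico 0 1) y :=
    (hasDerivAt_inverseBranch hN k hy.2.1).hasDerivWithinAt
  have himage (k : ℕ) : MeasurableSet (inverseBranch N k '' (C ∩ Ico 0 1)) :=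
    hA.image_of_continuousOn_injOn (fun y hy => (hderiv k y hy).continuousWithinAt) (hinj k)
  have hterm (k : ℕ) : Measurable fun y : ℝ =>
      ENNReal.ofReal (N / (N + k + y) ^ 2) * φ (inverseBranch N k y) :=
    Measurable.mul (by fun_prop) (hφ.comp (measurable_inverseBranch N k))
  simp only [transferOperator]
  rw [preimage_RN_inter_Ico hN, lintegral_tsum fun k => (hterm k).aemeasurable,
    lintegral_iUnion himage (pairwise_disjoint_image_inverseBranch hN inter_subset_right)]
  refine tsum_congr fun k => ?_
  rw [lintegral_image_eq_lintegral_abs_deriv_mul hA (hderiv k) (hinj k)]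
  refine lintegral_congr fun y => ?_
  rw [abs_of_nonneg (by positivity)]

theorem map_RN_withDensity (hN : 0 < N) {φ : ℝ → ℝ≥0∞} (hφ : Measurable φ) :
    ((volume.restrict (Icc (0 : ℝ) 1)).withDensity φ).map (RN N) =
      (volume.restrict (Icc (0 : ℝ) 1)).withDensity (transferOperator N φ) := by
  rw [← restrict_Ico_eq_restrict_Icc]
  ext C hC
  have hpre : MeasurableSet (RN N ⁻¹' C) := measurable_RN N hC
  rw [Measure.map_apply (measurable_RN N) hC, withDensity_apply _ hpre, withDensity_apply _ hC,
    Measure.restrict_restrict hpre, Measure.restrict_restrict hC, setLIntegral_preimage_RN hN hφ hC]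

lemma transferOperator_ofReal {h : ℝ → ℝ} {y S : ℝ} (hh : ∀ k, 0 ≤ h (inverseBranch N k y))
    (hS : HasSum (fun k : ℕ => N / (N + k + y) ^ 2 * h (inverseBranch N k y)) S) :
    transferOperator N (fun x => ENNReal.ofReal (h x)) y = ENNReal.ofReal S := by
  rw [← hS.tsum_eq, ENNReal.ofReal_tsum_of_nonneg (fun k => mul_nonneg (by positivity) (hh k))
    hS.summable]
  exact tsum_congr fun k => (ENNReal.ofReal_mul (by positivity)).symm

end TransferOperator

section Density

variable {N : ℕ}

lemma cast_sub_one_pos (hN : 2 ≤ N) : (0 : ℝ) < N - 1 :=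
  sub_pos.2 (Nat.one_lt_cast.2 hN)

lemma log_div_sub_one_pos (hN : 2 ≤ N) : 0 < log ((N : ℝ) / (N - 1)) :=
  log_pos ((one_lt_div (cast_sub_one_pos hN)).2 (sub_one_lt _))

theorem map_RN_rhoN (hN : 2 ≤ N) : (rhoN N).map (RN N) = rhoN N := by
  have hN1 := cast_sub_one_pos hN
  have hlog := log_div_sub_one_pos hN
  rw [rhoN, map_RN_withDensity (by lia) (by fun_prop)]
  refine withDensity_congr_ae <| (ae_restrict_iff' measurableSet_Icc).2 <|
    ae_of_all _ fun y ⟨hy, _⟩ => ?_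
  set c := (log ((N : ℝ) / (N - 1)))⁻¹
  have hc : 0 < c := inv_pos.2 hlog
  refine transferOperator_ofReal (fun k => ?_) ?_
  · have hx := (inverseBranch_mem_Ico (N := N) (by lia) k hy).1
    exact div_nonneg hc.le (by linarith)
  · have hsum := (hasSum_one_div_sub_one_div_pow (add_pos_of_pos_of_nonneg hN1 hy)
      one_ne_zero).mul_left c
    convert! hsum using 1
    · ext k
      have : (0 : ℝ) < k + (N - 1 + y) := by positivity
      have : (0 : ℝ) < N + k + y := by linarith
      have hx : inverseBranch N k y + N - 1 = N * (k + (N - 1 + y)) / (N + k + y) := by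
        rw [inverseBranch]
        field_simp
        ring
      have hD_succ : (k : ℝ) + 1 + (N - 1 + y) = N + k + y := by ring
      rw [hx, hD_succ]
      have : (N : ℝ) ≠ 0 := by linarith
      field_simp
      ring
    · rw [pow_one, mul_one_div, show y + N - 1 = N - 1 + y by ring]

theorem map_RN_rhoT (hN : 2 ≤ N) {t : ℝ} (ht : 0 ≤ t) :
    (rhoT N t).map (RN N) = (volume.restrict (Icc (0 : ℝ) 1)).withDensity
      fun y => ENNReal.ofReal ((N - 1 + t) * trigamma (N - 1 + (y + t))) := by
  have hN1 := cast_sub_one_pos hN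
  have hN0 : (N : ℝ) ≠ 0 := by linarith
  rw [rhoT, map_RN_withDensity (by lia) (by fun_prop)]
  refine withDensity_congr_ae <| (ae_restrict_iff' measurableSet_Icc).2 <|
    ae_of_all _ fun y ⟨hy, _⟩ => ?_
  refine transferOperator_ofReal (fun k => by positivity) ?_
  convert! (hasSum_trigamma (N - 1 + (y + t))).mul_left (N - 1 + t) using 1
  ext k
  have : (0 : ℝ) < N + k + y := by positivity
  have : (0 : ℝ) < k + (N - 1 + (y + t)) := by positivity
  have hx : N - (1 - inverseBranch N k y) * (1 - t)
      = N * (k + (N - 1 + (y + t))) / (N + k + y) := by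
    rw [inverseBranch]
    field_simp
    ring
  rw [hx]
  field_simp

/-- The density of the push-forward of `ρ^t_N` under `R_N` with respect to `ρ_N`. -/
noncomputable def densityRatio (N : ℕ) (t y : ℝ) : ℝ :=
  log ((N : ℝ) / (N - 1)) * ((N - 1 + t) * (N - 1 + y) * trigamma (N - 1 + (y + t)))

theorem map_RN_rhoT_eq_withDensity_rhoN (hN : 2 ≤ N) {t : ℝ} (ht : 0 ≤ t) :
    (rhoT N t).map (RN N) =
      (rhoN N).withDensity fun y => ENNReal.ofReal (densityRatio N t y) := by
  have hN1 := cast_sub_one_pos hN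
  have hlog := log_div_sub_one_pos hN
  have hratio : Measurable fun y => ENNReal.ofReal (densityRatio N t y) := by
    have := measurable_trigamma
    unfold densityRatio
    fun_prop
  rw [map_RN_rhoT hN ht, rhoN, ← withDensity_mul _ (by fun_prop) hratio]
  refine withDensity_congr_ae <| (ae_restrict_iff' measurableSet_Icc).2 <|
    ae_of_all _ fun y ⟨hy, _⟩ => ?_
  have hy' : 0 < y + N - 1 := by linarith
  rw [Pi.mul_apply, ← ENNReal.ofReal_mul (by positivity), densityRatio]
  rw [show y + N - 1 = N - 1 + y by ring] at hy' ⊢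
  field_simp

lemma isFiniteMeasure_rhoN (hN : 2 ≤ N) : IsFiniteMeasure (rhoN N) := by
  have hN1 := cast_sub_one_pos hN
  refine isFiniteMeasure_withDensity_ofReal (ContinuousOn.integrableOn_Icc ?_).2
  exact continuousOn_const.div (by fun_prop) fun y hy => by linarith [hy.1]

lemma restrict_absolutelyContinuous_rhoN (hN : 2 ≤ N) :
    volume.restrict (Icc (0 : ℝ) 1) ≪ rhoN N := by
  have hN1 := cast_sub_one_pos hN
  have hlog := log_div_sub_one_pos hN
  refine withDensity_absolutelyContinuous' (by fun_prop) <|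
    (ae_restrict_iff' measurableSet_Icc).2 <| ae_of_all _ fun y ⟨hy, _⟩ => ?_
  have hy' : 0 < y + N - 1 := by linarith
  exact (ENNReal.ofReal_pos.2 (by positivity)).ne'

lemma rhoN_Icc_pos (hN : 2 ≤ N) {δ : ℝ} (h0 : 0 < δ) (h1 : δ ≤ 1) : 0 < rhoN N (Icc 0 δ) := by
  refine pos_iff_ne_zero.2 fun h => ?_
  have hvol := restrict_absolutelyContinuous_rhoN hN h
  rw [Measure.restrict_apply measurableSet_Icc,
    inter_eq_self_of_subset_left (Icc_subset_Icc_right h1), volume_Icc, sub_zero,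
    ENNReal.ofReal_eq_zero] at hvol
  exact hvol.not_gt h0

lemma rhoN_preimage_RN (hN : 2 ≤ N) {C : Set ℝ} (hC : MeasurableSet C) :
    rhoN N (RN N ⁻¹' C) = rhoN N C := by
  rw [← Measure.map_apply (measurable_RN N) hC, map_RN_rhoN hN]

lemma toReal_rhoN_preimage_Icc_pos (hN : 2 ≤ N) {δ : ℝ} (h0 : 0 < δ) (h1 : δ ≤ 1) :
    0 < (rhoN N (RN N ⁻¹' Icc 0 δ)).toReal := by
  have := isFiniteMeasure_rhoN hN
  rw [rhoN_preimage_RN hN measurableSet_Icc]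
  exact ENNReal.toReal_pos (rhoN_Icc_pos hN h0 h1).ne' (measure_ne_top _ _)

lemma continuousOn_densityRatio (hN : 2 ≤ N) {t : ℝ} (ht : 0 ≤ t) :
    ContinuousOn (densityRatio N t) (Icc 0 1) := by
  have hN1 := cast_sub_one_pos hN
  have htri : ContinuousOn (fun y : ℝ => trigamma (N - 1 + (y + t))) (Icc 0 1) :=
    continuousOn_trigamma.comp (by fun_prop) fun y hy =>
      add_pos_of_pos_of_nonneg hN1 (add_nonneg hy.1 ht)
  unfold densityRatio
  fun_prop

lemma densityRatio_nonneg (hN : 2 ≤ N) {t y : ℝ} (ht : 0 ≤ t) (hy : 0 ≤ y) :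
    0 ≤ densityRatio N t y := by
  have hN1 := cast_sub_one_pos hN
  have hlog := log_div_sub_one_pos hN
  have htri := trigamma_nonneg (N - 1 + (y + t))
  unfold densityRatio
  positivity

theorem rhoT_div_rhoN_preimage_RN (hN : 2 ≤ N) {t : ℝ} (ht : 0 ≤ t) {C : Set ℝ}
    (hC : MeasurableSet C) (hC1 : C ⊆ Icc 0 1) :
    (rhoT N t (RN N ⁻¹' C)).toReal / (rhoN N (RN N ⁻¹' C)).toReal =
      ⨍ y in C, densityRatio N t y ∂rhoN N := by
  have hnonneg : 0 ≤ᵐ[(rhoN N).restrict C] densityRatio N t :=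
    (ae_restrict_iff' hC).2 <| ae_of_all _ fun y hy => densityRatio_nonneg hN ht (hC1 hy).1
  have hmeas : AEStronglyMeasurable (densityRatio N t) ((rhoN N).restrict C) :=
    ((continuousOn_densityRatio hN ht).mono hC1).aestronglyMeasurable hC
  rw [setAverage_eq, integral_eq_lintegral_of_nonneg_ae hnonneg hmeas, ← withDensity_apply _ hC,
    ← map_RN_rhoT_eq_withDensity_rhoN hN ht, Measure.map_apply (measurable_RN N) hC,
    rhoN_preimage_RN hN hC, smul_eq_mul, inv_mul_eq_div, Measure.real]

lemma setAverage_densityRatio_mem (hN : 2 ≤ N) {t : ℝ} (ht : 0 ≤ t) {C J : Set ℝ}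
    (hC : MeasurableSet C) (hC1 : C ⊆ Icc 0 1) (hpos : 0 < rhoN N C) (hJ : Convex ℝ J)
    (hJ' : IsClosed J) (hmem : MapsTo (densityRatio N t) C J) :
    ⨍ y in C, densityRatio N t y ∂rhoN N ∈ J := by
  have := isFiniteMeasure_rhoN hN
  have hint : IntegrableOn (densityRatio N t) C (rhoN N) :=
    ((continuousOn_densityRatio hN ht).integrableOn_compact isCompact_Icc).mono_set hC1
  exact hJ.set_average_mem hJ' hpos.ne' (measure_ne_top _ _)
    ((ae_restrict_iff' hC).2 (ae_of_all _ hmem)) hint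

end Density

lemma densityRatio_two (t y : ℝ) :
    densityRatio 2 t y = log 2 * ((1 + t) * (1 + y) * trigamma (1 + (y + t))) := by
  norm_num [densityRatio]

lemma densityRatio_two_mem_Icc {t y : ℝ} (ht : t ∈ Icc (0 : ℝ) 1) (hy : y ∈ Icc (0 : ℝ) 1) :
    densityRatio 2 t y ∈ Icc (log 2 * (5 / 4)) (π ^ 2 / 6 * log 2) := by
  rw [densityRatio_two, mul_comm (π ^ 2 / 6)]
  exact ⟨by gcongr; exact le_mul_trigamma ht hy, by gcongr; exact mul_trigamma_le ht hy⟩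

lemma densityRatio_two_zero_zero : densityRatio 2 0 0 = π ^ 2 / 6 * log 2 := by
  rw [densityRatio_two]
  simp [trigamma_one, mul_comm]

lemma two_le_log_two_mul : 2 ≤ log 2 * (5 / 4 + π ^ 2 / 6) :=
  calc (2 : ℝ) ≤ 0.6931471803 * (5 / 4 + 3.14 ^ 2 / 6) := by norm_num
    _ ≤ log 2 * (5 / 4 + π ^ 2 / 6) := by
      gcongr
      exacts [log_two_gt_d9.le, pi_gt_d2.le]

lemma exists_Icc_lt_setAverage_densityRatio {w : ℝ} (hw : w < π ^ 2 / 6 * log 2) :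
    ∃ δ ∈ Ioc (0 : ℝ) 1, w < ⨍ y in Icc 0 δ, densityRatio 2 0 y ∂rhoN 2 := by
  obtain ⟨v, hwv, hv⟩ := exists_between hw
  rw [← densityRatio_two_zero_zero] at hv
  have hcont : ContinuousWithinAt (densityRatio 2 0) (Ici 0) 0 :=
    (continuousOn_densityRatio le_rfl le_rfl 0 (by simp)).mono_of_mem_nhdsWithin
      (Icc_mem_nhdsGE one_pos)
  obtain ⟨u, hu, hsub⟩ := mem_nhdsGE_iff_exists_Icc_subset.1 (hcont.eventually_const_lt hv)
  have hδ : min u 1 ∈ Ioc (0 : ℝ) 1 := ⟨lt_min hu one_pos, min_le_right _ _⟩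
  refine ⟨min u 1, hδ, hwv.trans_le ?_⟩
  exact setAverage_densityRatio_mem le_rfl le_rfl measurableSet_Icc (Icc_subset_Icc_right hδ.2)
    (rhoN_Icc_pos le_rfl hδ.1 hδ.2) (convex_Ici v) isClosed_Ici
    fun y hy => mem_Ici.2 (hsub ⟨hy.1, hy.2.trans (min_le_left _ _)⟩).le

theorem stmt16 :
    sSup {r : ℝ | ∃ t ∈ Set.Icc (0 : ℝ) 1, ∃ C : Set ℝ, MeasurableSet C ∧
        C ⊆ Set.Icc (0 : ℝ) 1 ∧ 0 < (rhoN 2 (RN 2 ⁻¹' C)).toReal ∧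
        r = |(rhoT 2 t (RN 2 ⁻¹' C)).toReal / (rhoN 2 (RN 2 ⁻¹' C)).toReal - 1|}
      = Real.pi ^ 2 / 6 * Real.log 2 - 1 := by
  refine csSup_eq_of_forall_le_of_forall_lt_exists_gt ?nonempty ?upper ?approx
  case nonempty =>
    exact ⟨_, 0, by simp, Icc 0 1, measurableSet_Icc, Subset.rfl,
      toReal_rhoN_preimage_Icc_pos le_rfl one_pos le_rfl, rfl⟩
  case upper =>
    rintro _ ⟨t, ht, C, hC, hC1, hpos, rfl⟩
    rw [rhoN_preimage_RN le_rfl hC] at hpos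
    rw [rhoT_div_rhoN_preimage_RN le_rfl ht.1 hC hC1]
    obtain ⟨hlower, hupper⟩ := setAverage_densityRatio_mem le_rfl ht.1 hC hC1
      (ENNReal.toReal_pos_iff.1 hpos).1 (convex_Icc _ _) isClosed_Icc
      fun y hy => densityRatio_two_mem_Icc ht (hC1 hy)
    exact abs_le.2 ⟨by linarith [two_le_log_two_mul], by linarith⟩
  case approx =>
    intro w hw
    obtain ⟨δ, ⟨h0, h1⟩, hlt⟩ := exists_Icc_lt_setAverage_densityRatio (lt_sub_iff_add_lt.1 hw)
    have hsub : Icc 0 δ ⊆ Icc 0 1 := Icc_subset_Icc_right h1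
    refine ⟨_, ⟨0, by simp, Icc 0 δ, measurableSet_Icc, hsub,
      toReal_rhoN_preimage_Icc_pos le_rfl h0 h1, rfl⟩, ?_⟩
    rw [rhoT_div_rhoN_preimage_RN le_rfl le_rfl measurableSet_Icc hsub]
    exact (lt_sub_iff_add_lt.2 hlt).trans_le (le_abs_self _)
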